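/- Let Y be a finite set of unit vectors in ℝ^n whose pairwise inner products take exactly three values α > β > γ (a 3-distance spherical code), and suppose the annihilator polynomial F(x) = Π_{s∈{α,β,γ}} (x−s)/(1−s) has Gegenbauer expansion F = Σ_{k=0}^3 f_k Q_k with all f_k > 0 and f₀ = 1/|Y|. Then Y is a spherical 3-design. -/

import Mathlib

open scoped RealInnerProductSpace
open MeasureTheory Finset

/-- λ_k = k/(n−2+2k), coefficients of the Gegenbauer recurrence for dimension n. -/
noncomputable def gegLam (n : ℝ) (k : ℕ) : ℝ := k / (n - 2 + 2 * k)

/-- Gegenbauer polynomials Q_k for dimension n (Delsarte–Goethals–Seidel normalization):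
Q₀(t)=1, Q₁(t)=n·t, λ_{k+1}Q_{k+1}(t) = t·Q_k(t) − (1−λ_{k−1})Q_{k−1}(t). -/
noncomputable def geg (n : ℝ) : ℕ → ℝ → ℝ
  | 0, _ => 1
  | 1, t => n * t
  | (k + 2), t => (t * geg n (k + 1) t - (1 - gegLam n k) * geg n k t) / gegLam n (k + 2)


lemma geg_one (n t : ℝ) : geg n 1 t = n * t := by simp [geg]
lemma geg_two (n t : ℝ) (hn : 2 ≤ n) : geg n 2 t = (n * t^2 - 1) * (n+2)/2 := by
  have : n ≠ 0 := by linarith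
  have : n + 2 ≠ 0 := by linarith
  simp [geg, gegLam]
  rw [show n - 2 + 2 * 2 = n + 2 by ring]
  field_simp
lemma geg_three (n t : ℝ) (hn : 2 ≤ n) : geg n 3 t = n * (n+4)/6 * ((n+2) * t^3 - 3 * t) := by
  have h0 : n ≠ 0 := by linarith
  have : n + 4 ≠ 0 := by linarith
  have h : geg n 3 t = (t * geg n 2 t - (1 - gegLam n 1) * geg n 1 t) / gegLam n 3 := by
    simp [geg]
  rw [h, geg_two n t hn, geg_one]
  simp only [gegLam]
  push_cast
  rw [show n - 2 + 2 * 3 = n + 4 by ring, show n - 2 + 2 * 1 = n by ring]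
  field_simp
  ring

/-- sums of squares -/
lemma sq_sum {ι E : Type*} [Fintype ι] (Y : Finset E) (T : ι → E → ℝ) :
    ∑ i, (∑ y ∈ Y, T i y)^2 = ∑ a ∈ Y, ∑ b ∈ Y, ∑ i, T i a * T i b := by
  simp_rw [sq, Finset.sum_mul_sum]
  rw [Finset.sum_comm]
  refine Finset.sum_congr rfl fun a _ => ?_
  rw [Finset.sum_comm]

lemma T2_id {n : ℕ} (hn : (n:ℝ) ≠ 0) (a b : Fin n → ℝ) (s : ℝ) (ha : ∑ i, a i * a i = 1) (hb : ∑ i, b i * b i = 1)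
    (hs : ∑ i, a i * b i = s) :
    ∑ i : Fin n × Fin n, (a i.1 * a i.2 - (if i.1 = i.2 then 1 / (n:ℝ) else 0)) *
      (b i.1 * b i.2 - (if i.1 = i.2 then 1 / (n:ℝ) else 0)) = s^2 - 1/n := by
  rw [Fintype.sum_prod_type]
  have : ∀ i j, (a i * a j - (if i = j then 1 / (n:ℝ) else 0)) *
      (b i * b j - (if i = j then 1 / (n:ℝ) else 0)) = (a i * b i) * (a j * b j)
       - (if i = j then 1 / (n:ℝ) * (a i * a j + b i * b j) - 1/n * (1/n) else 0) := by
    intro i j; split_ifs <;> ring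
  simp only [this, Finset.sum_sub_distrib, Finset.sum_ite_eq, Finset.mem_univ, if_true, ← Finset.mul_sum, ← Finset.sum_mul, Finset.sum_add_distrib, ha, hb, hs]
  simp
  field_simp
  ring

lemma T3_id {n : ℕ} (a b : Fin n → ℝ) (s : ℝ) (ha : ∑ i, a i * a i = 1) (hb : ∑ i, b i * b i = 1)
    (hs : ∑ i, a i * b i = s) :
    ∑ i : Fin n × Fin n × Fin n, (a i.1 * a i.2.1 * a i.2.2 - 1 / ((n:ℝ) + 2) *
       ((if i.1 = i.2.1 then a i.2.2 else 0) + (if i.1 = i.2.2 then a i.2.1 else 0)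
        + (if i.2.1 = i.2.2 then a i.1 else 0))) *
      (b i.1 * b i.2.1 * b i.2.2 - 1 / ((n:ℝ) + 2) *
       ((if i.1 = i.2.1 then b i.2.2 else 0) + (if i.1 = i.2.2 then b i.2.1 else 0)
        + (if i.2.1 = i.2.2 then b i.1 else 0))) = s^3 - 3/(n+2) * s := by
  have hn : (n:ℝ) + 2 ≠ 0 := by positivity
  simp only [Fintype.sum_prod_type]
  set c := 1 / ((n:ℝ) + 2) with hc
  have : ∀ i j k, (a i * a j * a k - c * ((if i = j then a k else 0) + (if i = k then a j else 0)
        + (if j = k then a i else 0))) * (b i * b j * b k - c * ((if i = j then b k else 0) + (if i = k then b j else 0)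
        + (if j = k then b i else 0)))
      = (a i * b i) * (a j * b j) * (a k * b k)
       - (if i = j then c * ((a i * a j) * (a k * b k) + (b i * b j) * (a k * b k)) - c * c * (a k * b k) else 0)
       - (if i = k then c * ((a i * a k) * (a j * b j) + (b i * b k) * (a j * b j)) - c * c * (a j * b j) else 0)
       - (if j = k then c * ((a j * a k) * (a i * b i) + (b j * b k) * (a i * b i)) - c * c * (a i * b i) else 0)
       + (if i = j then if i = k then 6 * c * c * (a i * b i) else 0 else 0) := by
    intro i j k
    by_cases h1 : i = j <;> by_cases h2 : i = k <;> by_cases h3 : j = k <;> simp_all <;> ring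
  simp only [this, Finset.sum_sub_distrib, Finset.sum_add_distrib]
  have e1 : ∑ i, ∑ j, ∑ k, (a i * b i) * (a j * b j) * (a k * b k) = s^3 := by
    simp only [← Finset.mul_sum, ← Finset.sum_mul, hs]; ring
  have e2 : ∑ i : Fin n, ∑ j, ∑ k, (if i = j then c * ((a i * a j) * (a k * b k) + (b i * b j) * (a k * b k)) - c * c * (a k * b k) else 0) = 2 * c * s - n * c * c * s := by
    have h : ∀ i j : Fin n, ∑ k, (if i = j then c * ((a i * a j) * (a k * b k) + (b i * b j) * (a k * b k)) - c * c * (a k * b k) else 0) = if i = j then c * (a i * a j * s + b i * b j * s) - c * c * s else 0 := by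
      intro i j
      split_ifs
      · simp only [← Finset.mul_sum, Finset.sum_add_distrib, Finset.sum_sub_distrib, hs]
      · simp
    simp only [h, Finset.sum_ite_eq, Finset.mem_univ, if_true, ← Finset.mul_sum, ← Finset.sum_mul, Finset.sum_add_distrib, Finset.sum_sub_distrib, ha, hb, Finset.sum_const, Finset.card_univ, Fintype.card_fin, nsmul_eq_mul]
    ring
  have e3 : ∑ i : Fin n, ∑ j, ∑ k, (if i = k then c * ((a i * a k) * (a j * b j) + (b i * b k) * (a j * b j)) - c * c * (a j * b j) else 0) = 2 * c * s - n * c * c * s := by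
    simp only [Finset.sum_ite_eq, Finset.mem_univ, if_true, ← Finset.mul_sum, ← Finset.sum_mul, Finset.sum_add_distrib, Finset.sum_sub_distrib, ha, hb, hs, Finset.sum_const, Finset.card_univ, Fintype.card_fin, nsmul_eq_mul]
    ring
  have e4 : ∑ i : Fin n, ∑ j, ∑ k, (if j = k then c * ((a j * a k) * (a i * b i) + (b j * b k) * (a i * b i)) - c * c * (a i * b i) else 0) = 2 * c * s - n * c * c * s := by
    have h : ∀ i : Fin n, ∑ j, ∑ k, (if j = k then c * ((a j * a k) * (a i * b i) + (b j * b k) * (a i * b i)) - c * c * (a i * b i) else 0) = (2 * c - n * c * c) * (a i * b i) := by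
      intro i
      simp only [Finset.sum_ite_eq, Finset.mem_univ, if_true, ← Finset.mul_sum, ← Finset.sum_mul, Finset.sum_add_distrib, Finset.sum_sub_distrib, ha, hb, Finset.sum_const, Finset.card_univ, Fintype.card_fin, nsmul_eq_mul]
      ring
    simp only [h, ← Finset.mul_sum, hs]
    ring
  have e5 : ∑ i : Fin n, ∑ j, ∑ k, (if i = j then if i = k then 6 * c * c * (a i * b i) else 0 else 0) = 6 * c * c * s := by
    have : ∀ i j : Fin n, ∑ k, (if i = j then if i = k then 6 * c * c * (a i * b i) else 0 else 0) = if i = j then 6 * c * c * (a i * b i) else 0 := by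
      intro i j; split_ifs <;> simp
    simp only [this, Finset.sum_ite_eq, Finset.mem_univ, if_true, ← Finset.mul_sum, hs]
  rw [e1, e2, e3, e4, e5, hc]
  field_simp
  ring

lemma sph_inv {n : ℕ} (e : EuclideanSpace ℝ (Fin n) ≃ₗᵢ[ℝ] EuclideanSpace ℝ (Fin n))
    (g : EuclideanSpace ℝ (Fin n) → ℝ) :
    ∫ x : Metric.sphere (0 : EuclideanSpace ℝ (Fin n)) 1, g (e x)
      ∂((volume : Measure (EuclideanSpace ℝ (Fin n))).toSphere) =
    ∫ x : Metric.sphere (0 : EuclideanSpace ℝ (Fin n)) 1, g x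
      ∂((volume : Measure (EuclideanSpace ℝ (Fin n))).toSphere) := by
  let h : Metric.sphere (0 : EuclideanSpace ℝ (Fin n)) 1 ≃ₜ Metric.sphere (0 : EuclideanSpace ℝ (Fin n)) 1 :=
    e.toHomeomorph.subtype (fun x => by simp)
  have hm : MeasurePreserving h (volume : Measure (EuclideanSpace ℝ (Fin n))).toSphere
      (volume : Measure (EuclideanSpace ℝ (Fin n))).toSphere := by
    refine ⟨h.continuous.measurable, ?_⟩
    ext s hs
    rw [Measure.map_apply h.continuous.measurable hs, Measure.toSphere_apply' _ hs,
      Measure.toSphere_apply' _ (h.continuous.measurable hs)]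
    congr 1
    refine Eq.trans ?_ ((LinearIsometryEquiv.measurePreserving e).measure_preimage_emb e.toHomeomorph.measurableEmbedding _)
    congr 1
    ext x
    simp only [Set.mem_smul, Set.mem_image, Set.mem_preimage]
    constructor
    · rintro ⟨r, hr, _, ⟨z, hz, rfl⟩, rfl⟩
      exact ⟨r, hr, e z, ⟨h z, hz, rfl⟩, by simp⟩
    · rintro ⟨r, hr, _, ⟨z, hz, rfl⟩, hx⟩
      refine ⟨r, hr, h.symm z, ⟨h.symm z, by simpa using hz, rfl⟩, ?_⟩
      apply e.injective
      rw [map_smul]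
      have : e (h.symm z : EuclideanSpace ℝ (Fin n)) = z := congrArg Subtype.val (h.apply_symm_apply z)
      rw [this]; exact hx
  exact hm.integral_comp h.measurableEmbedding (fun x => g x)

lemma sph_odd {n : ℕ} (g : EuclideanSpace ℝ (Fin n) → ℝ) (hg : ∀ x, g (-x) = - g x) :
    ∫ x : Metric.sphere (0 : EuclideanSpace ℝ (Fin n)) 1, g x
      ∂((volume : Measure (EuclideanSpace ℝ (Fin n))).toSphere) = 0 := by
  have := sph_inv (LinearIsometryEquiv.neg ℝ) g
  simp only [LinearIsometryEquiv.coe_neg, hg, integral_neg] at this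
  linarith

lemma sph_off {n : ℕ} (i j : Fin n) (hij : i ≠ j) :
    ∫ x : Metric.sphere (0 : EuclideanSpace ℝ (Fin n)) 1, x.1 i * x.1 j
      ∂((volume : Measure (EuclideanSpace ℝ (Fin n))).toSphere) = 0 := by
  have := sph_inv (LinearIsometryEquiv.piLpCongrRight 2
    (fun k : Fin n => if k = i then LinearIsometryEquiv.neg ℝ (E := ℝ) else LinearIsometryEquiv.refl ℝ ℝ)) (fun x => x i * x j)
  simp [hij.symm, integral_neg] at this
  linarith

lemma sph_cont {n : ℕ} (g : EuclideanSpace ℝ (Fin n) → ℝ) (hg : Continuous g) :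
    Integrable (fun x : Metric.sphere (0 : EuclideanSpace ℝ (Fin n)) 1 => g x)
      ((volume : Measure (EuclideanSpace ℝ (Fin n))).toSphere) := by
  have : Continuous (fun x : Metric.sphere (0 : EuclideanSpace ℝ (Fin n)) 1 => g x) := by fun_prop
  exact this.integrable_of_hasCompactSupport (HasCompactSupport.of_compactSpace _)

lemma sph_diag {n : ℕ} (i : Fin n) :
    n * ∫ x : Metric.sphere (0 : EuclideanSpace ℝ (Fin n)) 1, x.1 i * x.1 i
      ∂((volume : Measure (EuclideanSpace ℝ (Fin n))).toSphere) = 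
      (((volume : Measure (EuclideanSpace ℝ (Fin n))).toSphere Set.univ).toReal) := by
  have h : ∀ j : Fin n, ∫ x : Metric.sphere (0 : EuclideanSpace ℝ (Fin n)) 1, x.1 j * x.1 j
      ∂((volume : Measure (EuclideanSpace ℝ (Fin n))).toSphere) = ∫ x : Metric.sphere (0 : EuclideanSpace ℝ (Fin n)) 1, x.1 i * x.1 i
      ∂((volume : Measure (EuclideanSpace ℝ (Fin n))).toSphere) := by
    intro j
    have := sph_inv (LinearIsometryEquiv.piLpCongrLeft 2 ℝ ℝ (Equiv.swap i j)) (fun x => x i * x i)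
    simpa [LinearIsometryEquiv.piLpCongrLeft_apply] using this
  have h2 := Finset.sum_congr (rfl : (univ : Finset (Fin n)) = univ) (fun j _ => h j)
  rw [← integral_finsetSum _ (fun j _ => sph_cont (fun x => x j * x j) (by fun_prop))] at h2
  simp only [Finset.sum_const, Finset.card_univ, Fintype.card_fin, nsmul_eq_mul] at h2
  rw [← h2]
  have : ∀ x : Metric.sphere (0 : EuclideanSpace ℝ (Fin n)) 1, ∑ j, x.1 j * x.1 j = 1 := by
    intro x
    have := EuclideanSpace.real_norm_sq_eq x.1
    simp at this
    simp [← sq, ← this]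
  simp only [this]
  simp [Measure.real]

lemma inner_coord {n : ℕ} (a b : EuclideanSpace ℝ (Fin n)) : ∑ i, a i * b i = ⟪a, b⟫ := by
  simp [PiLp.inner_apply, mul_comm]

lemma self_coord {n : ℕ} (a : EuclideanSpace ℝ (Fin n)) (h : ‖a‖ = 1) : ∑ i, a i * a i = 1 := by
  rw [inner_coord, real_inner_self_eq_norm_sq, h]; norm_num

/-- The discrete moments. -/
lemma moments (n : ℕ) (hn : 2 ≤ n) (Y : Finset (EuclideanSpace ℝ (Fin n)))
    (hY : Y.Nonempty)
    (hunit : ∀ y ∈ Y, ‖y‖ = 1)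
    (f1 f2 f3 : ℝ) (h1 : 0 < f1) (h2 : 0 < f2) (h3 : 0 < f3)
    (hexp : ∑ a ∈ Y, ∑ b ∈ Y, (1 / (Y.card : ℝ) + f1 * geg n 1 ⟪a, b⟫ + f2 * geg n 2 ⟪a, b⟫
      + f3 * geg n 3 ⟪a, b⟫) = Y.card) :
    (∀ i, ∑ y ∈ Y, y i = 0) ∧ (∀ i j, ∑ y ∈ Y, y i * y j = if i = j then (Y.card : ℝ) / n else 0)
    ∧ (∀ i j k, ∑ y ∈ Y, y i * y j * y k = 0) := by
  have hnR : (2:ℝ) ≤ n := by exact_mod_cast hn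
  have hn0 : (n:ℝ) ≠ 0 := by linarith
  have hc : (Y.card : ℝ) ≠ 0 := by exact_mod_cast hY.card_pos.ne'
  have e1 := sq_sum Y (fun (i : Fin n) y => y i)
  have e2 := sq_sum Y (fun (i : Fin n × Fin n) y => y i.1 * y i.2 - (if i.1 = i.2 then 1 / (n:ℝ) else 0))
  have e3 := sq_sum Y (fun (i : Fin n × Fin n × Fin n) a => a i.1 * a i.2.1 * a i.2.2 - 1 / ((n:ℝ) + 2) *
       ((if i.1 = i.2.1 then a i.2.2 else 0) + (if i.1 = i.2.2 then a i.2.1 else 0)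
        + (if i.2.1 = i.2.2 then a i.1 else 0)))
  have g1 : ∑ a ∈ Y, ∑ b ∈ Y, ∑ i, a i * b i = ∑ a ∈ Y, ∑ b ∈ Y, ⟪a, b⟫ := by
    simp only [inner_coord]
  rw [g1] at e1
  replace e2 := e2.trans (Finset.sum_congr rfl (fun a ha => Finset.sum_congr rfl (fun b hb =>
    T2_id hn0 (fun i => a i) (fun i => b i) _ (self_coord a (hunit a ha)) (self_coord b (hunit b hb)) (inner_coord a b))))
  replace e3 := e3.trans (Finset.sum_congr rfl (fun a ha => Finset.sum_congr rfl (fun b hb =>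
    T3_id (fun i => a i) (fun i => b i) _ (self_coord a (hunit a ha)) (self_coord b (hunit b hb)) (inner_coord a b))))
  set A := ∑ i : Fin n, (∑ y ∈ Y, y i)^2 with hA
  set B := ∑ i : Fin n × Fin n, (∑ y ∈ Y, (y i.1 * y i.2 - (if i.1 = i.2 then 1 / (n:ℝ) else 0)))^2 with hB
  set C := ∑ i : Fin n × Fin n × Fin n, (∑ a ∈ Y, (a i.1 * a i.2.1 * a i.2.2 - 1 / ((n:ℝ) + 2) *
       ((if i.1 = i.2.1 then a i.2.2 else 0) + (if i.1 = i.2.2 then a i.2.1 else 0)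
        + (if i.2.1 = i.2.2 then a i.1 else 0))))^2 with hC
  have A0 : 0 ≤ A := Finset.sum_nonneg fun i _ => sq_nonneg _
  have B0 : 0 ≤ B := Finset.sum_nonneg fun i _ => sq_nonneg _
  have C0 : 0 ≤ C := Finset.sum_nonneg fun i _ => sq_nonneg _
  have key : f1 * n * A + f2 * (n * (n+2)/2) * B + f3 * (n * (n+4)/6 * (n+2)) * C = 0 := by
    have : ∀ a b : EuclideanSpace ℝ (Fin n), 1 / (Y.card : ℝ) + f1 * geg n 1 ⟪a, b⟫ + f2 * geg n 2 ⟪a, b⟫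
      + f3 * geg n 3 ⟪a, b⟫ = 1 / (Y.card : ℝ) + f1 * n * ⟪a, b⟫ + f2 * (n * (n+2)/2) * (⟪a, b⟫^2 - 1/n)
       + f3 * (n * (n+4)/6 * (n+2)) * (⟪a, b⟫^3 - 3/(n+2) * ⟪a, b⟫) := by
      intro a b
      rw [geg_one, geg_two _ _ hnR, geg_three _ _ hnR]
      field_simp
    simp only [this] at hexp
    simp only [Finset.sum_add_distrib, ← Finset.mul_sum] at hexp
    rw [← e1, ← e2, ← e3] at hexp
    have : ∑ a ∈ Y, ∑ b ∈ Y, 1 / (Y.card : ℝ) = Y.card := by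
      simp [hc]
    rw [this] at hexp
    linarith
  have pA : 0 < f1 * n := by positivity
  have pB : 0 < f2 * (n * (n+2)/2) := by positivity
  have pC : 0 < f3 * (n * (n+4)/6 * (n+2)) := by positivity
  have qA := mul_nonneg pA.le A0
  have qB := mul_nonneg pB.le B0
  have qC := mul_nonneg pC.le C0
  have zA : A = 0 := (mul_eq_zero.1 (by linarith : f1 * n * A = 0)).resolve_left pA.ne'
  have zB : B = 0 := (mul_eq_zero.1 (by linarith : f2 * (n * (n+2)/2) * B = 0)).resolve_left pB.ne'
  have zC : C = 0 := (mul_eq_zero.1 (by linarith : f3 * (n * (n+4)/6 * (n+2)) * C = 0)).resolve_left pC.ne'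
  rw [hA, Finset.sum_eq_zero_iff_of_nonneg (fun i _ => sq_nonneg _)] at zA
  rw [hB, Finset.sum_eq_zero_iff_of_nonneg (fun i _ => sq_nonneg _)] at zB
  rw [hC, Finset.sum_eq_zero_iff_of_nonneg (fun i _ => sq_nonneg _)] at zC
  have m1 : ∀ i, ∑ y ∈ Y, y i = 0 := fun i => pow_eq_zero_iff two_ne_zero |>.1 (zA i (Finset.mem_univ _))
  refine ⟨m1, fun i j => ?_, fun i j k => ?_⟩
  · have := pow_eq_zero_iff two_ne_zero |>.1 (zB (i, j) (Finset.mem_univ _))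
    rw [Finset.sum_sub_distrib, sub_eq_zero] at this
    rw [this]
    split_ifs <;> simp [div_eq_mul_inv]
  · have := pow_eq_zero_iff two_ne_zero |>.1 (zC (i, j, k) (Finset.mem_univ _))
    have ite0 : ∀ (P : Prop) [Decidable P] (i : Fin n), ∑ y ∈ Y, (if P then y i else 0) = 0 := by
      intro P _ i; split_ifs
      · exact m1 i
      · simp
    simp only [Finset.sum_sub_distrib, ← Finset.mul_sum, Finset.sum_add_distrib, ite0] at this
    linarith

lemma two_le {n : ℕ} (Y : Finset (EuclideanSpace ℝ (Fin n))) (hunit : ∀ y ∈ Y, ‖y‖ = 1)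
    (α β : ℝ) (hαβ : β < α)
    (hattα : ∃ a ∈ Y, ∃ b ∈ Y, a ≠ b ∧ ⟪a, b⟫ = α)
    (hattβ : ∃ a ∈ Y, ∃ b ∈ Y, a ≠ b ∧ ⟪a, b⟫ = β) : 2 ≤ n := by
  by_contra hn
  have hn : n = 0 ∨ n = 1 := by omega
  rcases hn with rfl | rfl
  · obtain ⟨a, _, b, _, h, _⟩ := hattα
    exact h (Subsingleton.elim _ _)
  · have key : ∀ a ∈ Y, ∀ b ∈ Y, a ≠ b → ⟪a, b⟫ = -1 := by
      intro a ha b hb hab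
      have h1 := self_coord a (hunit a ha)
      have h2 := self_coord b (hunit b hb)
      rw [← inner_coord]
      simp only [Finset.univ_unique, Fin.default_eq_zero, Finset.sum_singleton] at *
      have h3 : a 0 ≠ b 0 := fun h => hab (by ext i; fin_cases i; exact h)
      rcases mul_self_eq_one_iff.1 h1 with h | h <;> rcases mul_self_eq_one_iff.1 h2 with h' | h' <;>
        simp_all
    obtain ⟨a, ha, b, hb, h, rfl⟩ := hattα
    obtain ⟨c, hc, d, hd, h', rfl⟩ := hattβ
    rw [key a ha b hb h, key c hc d hd h'] at hαβ
    exact lt_irrefl _ hαβ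

/-- agreement on multisets gives agreement on polynomials. -/
lemma mono_case {n : ℕ} (hn : 2 ≤ n) (Y : Finset (EuclideanSpace ℝ (Fin n))) (hY : Y.Nonempty)
    (m1 : ∀ i, ∑ y ∈ Y, y i = 0) (m2 : ∀ i j, ∑ y ∈ Y, y i * y j = if i = j then (Y.card : ℝ) / n else 0)
    (m3 : ∀ i j k, ∑ y ∈ Y, y i * y j * y k = 0) (s : Multiset (Fin n)) (hs : s.card ≤ 3) :
    (∑ y ∈ Y, (s.map (fun i => y i)).prod) / (Y.card : ℝ) =
        (∫ x : Metric.sphere (0 : EuclideanSpace ℝ (Fin n)) 1,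
            (s.map (fun i => (x : EuclideanSpace ℝ (Fin n)) i)).prod
          ∂((volume : Measure (EuclideanSpace ℝ (Fin n))).toSphere)) /
        (((volume : Measure (EuclideanSpace ℝ (Fin n))).toSphere Set.univ).toReal) := by
  have hc : (Y.card : ℝ) ≠ 0 := by exact_mod_cast hY.card_pos.ne'
  have hn0 : (n:ℝ) ≠ 0 := by
    have : n ≠ 0 := by omega
    exact_mod_cast this
  have : Nontrivial (EuclideanSpace ℝ (Fin n)) := by
    have : Nonempty (Fin n) := ⟨⟨0, by omega⟩⟩
    infer_instance
  have hv : (((volume : Measure (EuclideanSpace ℝ (Fin n))).toSphere Set.univ).toReal) ≠ 0 := by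
    rw [ENNReal.toReal_ne_zero]
    exact ⟨by simpa only [ne_eq, Measure.measure_univ_eq_zero] using Measure.toSphere_ne_zero _, measure_ne_top _ _⟩
  have : s.card = 0 ∨ s.card = 1 ∨ s.card = 2 ∨ s.card = 3 := by omega
  rcases this with h | h | h | h
  · rw [Multiset.card_eq_zero] at h
    subst h
    simp only [Multiset.map_zero, Multiset.prod_zero, Finset.sum_const, integral_const, smul_eq_mul, nsmul_eq_mul, mul_one, Measure.real]
    rw [div_self hc, div_self hv]
  · obtain ⟨i, rfl⟩ := Multiset.card_eq_one.1 h
    simp only [Multiset.map_singleton, Multiset.prod_singleton, m1]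
    rw [sph_odd (fun x => x i) (by intro x; simp)]
    simp
  · obtain ⟨i, j, rfl⟩ := Multiset.card_eq_two.1 h
    simp only [Multiset.insert_eq_cons, Multiset.map_cons, Multiset.prod_cons, Multiset.map_singleton, Multiset.prod_singleton, m2]
    by_cases hij : i = j
    · subst hij
      have := sph_diag i
      rw [← this] at hv ⊢
      have h0 := right_ne_zero_of_mul hv
      simp only [if_true]
      generalize (∫ x : Metric.sphere (0 : EuclideanSpace ℝ (Fin n)) 1, x.1 i * x.1 i
        ∂((volume : Measure (EuclideanSpace ℝ (Fin n))).toSphere)) = I at h0 ⊢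
      field_simp
    · rw [sph_off i j hij]; simp [hij]
  · obtain ⟨i, j, k, rfl⟩ := Multiset.card_eq_three.1 h
    simp only [Multiset.insert_eq_cons, Multiset.map_cons, Multiset.prod_cons, Multiset.map_singleton, Multiset.prod_singleton, ← mul_assoc, m3]
    rw [sph_odd (fun x => x i * x j * x k) (by intro x; simp)]
    simp

lemma eval_ms {n : ℕ} (p : MvPolynomial (Fin n) ℝ) (x : Fin n → ℝ) :
    MvPolynomial.eval x p = ∑ d ∈ p.support, p.coeff d * ((Finsupp.toMultiset d).map x).prod := by
  rw [MvPolynomial.eval_eq']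
  refine Finset.sum_congr rfl fun d _ => ?_
  congr 1
  rw [Finsupp.toMultiset_map, Finsupp.prod_toMultiset, Finsupp.prod_mapDomain_index (by simp)
    (by intros; rw [pow_add]), Finsupp.prod_fintype _ _ (by simp)]

/-- A 3-distance set of unit vectors in ℝⁿ whose annihilator polynomial has a
Gegenbauer expansion F = Σ_{k≤3} f_k Q_k with all f_k > 0 and f₀ = 1/|Y| is a spherical
3-design: the average over Y of every polynomial of degree ≤ 3 equals its average over
the unit sphere. -/
theorem stmt_13 (n : ℕ) (Y : Finset (EuclideanSpace ℝ (Fin n)))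
    (hY : Y.Nonempty)
    (hunit : ∀ y ∈ Y, ‖y‖ = 1)
    (α β γ : ℝ) (hαβ : β < α) (hβγ : γ < β)
    (hval : ∀ a ∈ Y, ∀ b ∈ Y, a ≠ b → ⟪a, b⟫ ∈ ({α, β, γ} : Set ℝ))
    (hattα : ∃ a ∈ Y, ∃ b ∈ Y, a ≠ b ∧ ⟪a, b⟫ = α)
    (hattβ : ∃ a ∈ Y, ∃ b ∈ Y, a ≠ b ∧ ⟪a, b⟫ = β)
    (hattγ : ∃ a ∈ Y, ∃ b ∈ Y, a ≠ b ∧ ⟪a, b⟫ = γ)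
    (f : Fin 4 → ℝ) (hfpos : ∀ k, 0 < f k) (hf0 : f 0 = 1 / (Y.card : ℝ))
    (hexp : ∀ x : ℝ, ((x - α) * (x - β) * (x - γ)) / ((1 - α) * (1 - β) * (1 - γ)) =
        ∑ k : Fin 4, f k * geg n k x) :
    ∀ p : MvPolynomial (Fin n) ℝ, p.totalDegree ≤ 3 →
      (∑ y ∈ Y, MvPolynomial.eval (fun i => y i) p) / (Y.card : ℝ) =
        (∫ x : Metric.sphere (0 : EuclideanSpace ℝ (Fin n)) 1,
            MvPolynomial.eval (fun i => (x : EuclideanSpace ℝ (Fin n)) i) p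
          ∂((volume : Measure (EuclideanSpace ℝ (Fin n))).toSphere)) /
        (((volume : Measure (EuclideanSpace ℝ (Fin n))).toSphere Set.univ).toReal) := by
  have hn := two_le Y hunit α β hαβ hattα hattβ
  have lt1 : ∀ a ∈ Y, ∀ b ∈ Y, a ≠ b → ⟪a, b⟫ < 1 := fun a ha b hb h =>
    (inner_lt_one_iff_real_of_norm_eq_one (hunit a ha) (hunit b hb)).2 h
  have hα : α < 1 := by
    obtain ⟨a, ha, b, hb, h, rfl⟩ := hattα
    exact lt1 a ha b hb h
  have d1 : 1 - α ≠ 0 := by linarith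
  have d2 : 1 - β ≠ 0 := by linarith
  have d3 : 1 - γ ≠ 0 := by linarith
  have hF : ∑ a ∈ Y, ∑ b ∈ Y, (1 / (Y.card : ℝ) + f 1 * geg n 1 ⟪a, b⟫ + f 2 * geg n 2 ⟪a, b⟫
      + f 3 * geg n 3 ⟪a, b⟫) = Y.card := by
    have : ∀ a ∈ Y, ∑ b ∈ Y, (1 / (Y.card : ℝ) + f 1 * geg n 1 ⟪a, b⟫ + f 2 * geg n 2 ⟪a, b⟫
      + f 3 * geg n 3 ⟪a, b⟫) = 1 := by
      intro a ha
      have h : ∀ b, 1 / (Y.card : ℝ) + f 1 * geg n 1 ⟪a, b⟫ + f 2 * geg n 2 ⟪a, b⟫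
        + f 3 * geg n 3 ⟪a, b⟫ = ((⟪a, b⟫ - α) * (⟪a, b⟫ - β) * (⟪a, b⟫ - γ)) / ((1 - α) * (1 - β) * (1 - γ)) := by
        intro b
        rw [hexp, Fin.sum_univ_four, hf0]
        simp [geg]
      rw [Finset.sum_eq_single a]
      · rw [h, real_inner_self_eq_norm_sq, hunit a ha]
        field_simp
      · intro b hb hba
        rw [h]
        have := hval a ha b hb hba.symm
        simp only [Set.mem_insert_iff, Set.mem_singleton_iff] at this
        rcases this with h | h | h <;> simp [h]
      · exact fun h => absurd ha h
    rw [Finset.sum_congr rfl this]; simp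
  obtain ⟨m1, m2, m3⟩ := moments n hn Y hY hunit (f 1) (f 2) (f 3) (hfpos 1) (hfpos 2) (hfpos 3) hF
  intro p hp
  simp only [eval_ms]
  rw [Finset.sum_comm, integral_finsetSum]
  · simp only [← Finset.mul_sum, integral_const_mul, Finset.sum_div]
    refine Finset.sum_congr rfl fun d hd => ?_
    rw [mul_div_assoc, mul_div_assoc]
    congr 1
    refine mono_case hn Y hY m1 m2 m3 _ ?_
    rw [Finsupp.card_toMultiset]
    exact (MvPolynomial.le_totalDegree hd).trans hp
  · intro d _
    refine sph_cont (fun x => p.coeff d * ((Finsupp.toMultiset d).map (fun i => x i)).prod) ?_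
    refine continuous_const.mul (continuous_multiset_prod _ fun i _ => ?_)
    fun_prop
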